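/- Let C ⊆ ℝ² be a closed planar sector (cone) with vertex at the origin and opening angle α ∈ (0, 2π), and let x ∈ ∂C with x ≠ 0. Then the fractional curvature H_s(x, C), defined as a principal value, satisfies H_s(x,C) ≤ 0 if and only if α ≥ π, and H_s(x,C) = 0 if and only if α = π. -/

import Mathlib

open MeasureTheory Set Filter Topology Real

/-- Principal-value fractional curvature in the plane:
`fracCurvPV s E x h` means `H_s(x,E) = h` where
`H_s(x,E) = p.v. ∫ (χ_{Eᶜ}(y) - χ_E(y)) |x-y|^{-(2+s)} dy`. -/
noncomputable def fracCurvPV (s : ℝ) (E : Set (EuclideanSpace ℝ (Fin 2)))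
    (x : EuclideanSpace ℝ (Fin 2)) (h : ℝ) : Prop :=
  Tendsto (fun ε : ℝ => ∫ y in {y | ε ≤ dist x y},
      (Set.indicator Eᶜ (fun _ => (1 : ℝ)) y - Set.indicator E (fun _ => (1 : ℝ)) y)
        * dist x y ^ (-(2 + s)))
    (𝓝[>] (0 : ℝ)) (𝓝 h)

/-- The closed planar sector with vertex `0`, initial angle `θ₀` and opening angle `α`. -/
def sector (θ₀ α : ℝ) : Set (EuclideanSpace ℝ (Fin 2)) :=
  {p | ∃ r θ : ℝ, 0 ≤ r ∧ θ ∈ Set.Icc θ₀ (θ₀ + α) ∧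
    p 0 = r * Real.cos θ ∧ p 1 = r * Real.sin θ}

/-!
Enlarging a set can only lower its curvature: for `E ⊆ F` with `x` fixed, the truncated curvatures
differ by `2 ∫_{F \ E} |x - y|^{-(2+s)} dy` over the truncated domain. A half-plane with `x` on its
boundary line has curvature `0`, because the reflection in `x` exchanges it with its complement. A
boundary point of a sector of angle `α` lies on one of its two edges. The half-plane bounded by the
line through that edge, on the side of the sector, is the sector of angle `π` sharing that edge: it
contains the given sector when `α ≤ π` and is contained in it when `α ≥ π`, and the two differ by a
set of positive measure unless `α = π`.
-/

section SignDensity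

variable {X : Type*} {E F : Set X}

/-- The density `χ_{Eᶜ} - χ_E` integrated by the fractional curvature. -/
noncomputable def signDensity (E : Set X) (y : X) : ℝ :=
  Eᶜ.indicator (fun _ => 1) y - E.indicator (fun _ => 1) y

lemma measurable_signDensity [MeasurableSpace X] (hE : MeasurableSet E) :
    Measurable (signDensity E) :=
  (measurable_const.indicator hE.compl).sub (measurable_const.indicator hE)

lemma abs_signDensity (E : Set X) (y : X) : |signDensity E y| = 1 := by
  by_cases hy : y ∈ E <;> simp [signDensity, hy]

lemma signDensity_eq_neg_of_mem_iff_notMem {y z : X} (h : y ∈ E ↔ z ∉ E) :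
    signDensity E y = -signDensity E z := by
  by_cases hz : z ∈ E <;> simp_all [signDensity]

lemma signDensity_sub_signDensity_of_subset (hEF : E ⊆ F) (y : X) :
    signDensity E y - signDensity F y = (F \ E).indicator (fun _ => 2) y := by
  by_cases hE : y ∈ E
  · simp [signDensity, hE, hEF hE]
  · by_cases hF : y ∈ F <;> simp [signDensity, hE, hF]
    norm_num

end SignDensity

lemma exists_pos_measure_le_dist_inter_pos {X : Type*} [MetricSpace X] [MeasurableSpace X]
    {μ : Measure X} [NullSingletonClass μ] (x : X) {A : Set X} (hA : 0 < μ A) :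
    ∃ δ > 0, 0 < μ ({y | δ ≤ dist x y} ∩ A) := by
  by_contra! hnull
  have hcover : A ⊆ {x} ∪ ⋃ n : ℕ, {y | 1 / ((n : ℝ) + 1) ≤ dist x y} ∩ A := by
    intro y hy
    rcases eq_or_ne y x with hyx | hyx
    · exact .inl hyx
    · obtain ⟨n, hn⟩ := exists_nat_one_div_lt (dist_pos.mpr hyx.symm)
      exact .inr (mem_iUnion.mpr ⟨n, hn.le, hy⟩)
  refine hA.ne' (measure_mono_null hcover (measure_union_null (measure_singleton x) ?_))
  exact measure_iUnion_null fun n => nonpos_iff_eq_zero.mp (hnull _ Nat.one_div_pos_of_nat)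

/-- The truncation at distance `ε` of the principal value `p.v. ∫ (χ_{Eᶜ} - χ_E)(y) |x-y|^{-r} dy`.
The fractional curvature of order `s` in dimension `d` corresponds to `r = d + s`. -/
noncomputable def truncatedFracCurv {X : Type*} [Dist X] [MeasurableSpace X] (μ : Measure X)
    (r : ℝ) (E : Set X) (x : X) (ε : ℝ) : ℝ :=
  ∫ y in {y | ε ≤ dist x y}, signDensity E y * dist x y ^ (-r) ∂μ

lemma fracCurvPV_iff_tendsto {s h : ℝ} {E : Set (EuclideanSpace ℝ (Fin 2))}
    {x : EuclideanSpace ℝ (Fin 2)} :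
    fracCurvPV s E x h ↔ Tendsto (truncatedFracCurv volume (2 + s) E x) (𝓝[>] 0) (𝓝 h) :=
  Iff.rfl

section TruncatedFracCurv

variable {V : Type*} [NormedAddCommGroup V] [MeasurableSpace V] [BorelSpace V] {μ : Measure V}
  {r ε : ℝ} {E F : Set V} {x : V}

lemma truncatedFracCurv_eq_zero_of_reflection_ae_eq_compl [SecondCountableTopology V]
    [μ.IsNegInvariant] [μ.IsAddLeftInvariant] (hE : Equiv.pointReflection x ⁻¹' E =ᵐ[μ] Eᶜ) :
    truncatedFracCurv μ r E x ε = 0 := by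
  have hB : MeasurableSet {y : V | ε ≤ dist x y} := measurableSet_le measurable_const (by fun_prop)
  set g : V → ℝ := {y | ε ≤ dist x y}.indicator fun y => signDensity E y * dist x y ^ (-r)
  have hodd : (fun y => g (Equiv.pointReflection x y)) =ᵐ[μ] fun y => -g y := by
    filter_upwards [hE.mem_iff] with y (hy : Equiv.pointReflection x y ∈ E ↔ y ∉ E)
    simp only [g, indicator, mem_ofPred_eq, dist_left_pointReflection,
      signDensity_eq_neg_of_mem_iff_notMem hy]
    split_ifs <;> simp
  have hinv : ∫ y, g (Equiv.pointReflection x y) ∂μ = ∫ y, g y ∂μ := by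
    simp only [Equiv.pointReflection_eq_subLeft, Equiv.subLeft_apply]
    exact integral_sub_left_eq_self g μ (2 • x)
  rw [integral_congr_ae hodd, integral_neg] at hinv
  rw [truncatedFracCurv, ← integral_indicator hB]
  exact neg_eq_self.mp hinv

variable [NormedSpace ℝ V] [FiniteDimensional ℝ V] [μ.IsAddHaarMeasure]

lemma measure_setOf_apply_eq_const_eq_zero {f : V →L[ℝ] ℝ} (hf : f ≠ 0) (c : ℝ) :
    μ {y | f y = c} = 0 := by
  have hf' : f.toLinearMap ≠ 0 := fun h => hf (ContinuousLinearMap.ext (LinearMap.congr_fun h))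
  have hker : LinearMap.ker f.toLinearMap ≠ ⊤ := by rwa [Ne, LinearMap.ker_eq_top]
  obtain ⟨x, rfl⟩ : ∃ x, f x = c := LinearMap.surjective hf' c
  have htranslate : {y | f y = f x} = (· + -x) ⁻¹' (LinearMap.ker f.toLinearMap : Set V) := by
    ext y
    simp [add_neg_eq_zero]
  rw [htranslate, measure_preimage_add_right]
  exact Measure.addHaar_submodule μ _ hker

lemma truncatedFracCurv_halfSpace {f : V →L[ℝ] ℝ} (hf : f ≠ 0) (x : V) :
    truncatedFracCurv μ r {y | f x ≤ f y} x ε = 0 := by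
  refine truncatedFracCurv_eq_zero_of_reflection_ae_eq_compl (eventuallyEq_set.mpr ?_)
  have hne : ∀ᵐ y ∂μ, f y ≠ f x :=
    compl_mem_ae_iff.mpr (measure_setOf_apply_eq_const_eq_zero hf (f x))
  filter_upwards [hne] with y hy
  change f x ≤ f (x - y + x) ↔ ¬f x ≤ f y
  rw [map_add, map_sub, le_add_iff_nonneg_left, sub_nonneg, not_le, hy.le_iff_lt]

lemma integrableOn_dist_rpow_neg (hr : Module.finrank ℝ V < r) (x : V) (hε : 0 < ε) :
    IntegrableOn (fun y => dist x y ^ (-r)) {y | ε ≤ dist x y} μ := by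
  have hr0 : 0 < r := (Nat.cast_nonneg _).trans_lt hr
  have hint : Integrable (fun y => (ε / (1 + ε)) ^ (-r) * (1 + ‖y - x‖) ^ (-r)) μ :=
    ((integrable_one_add_norm hr).comp_sub_right x).const_mul _
  have hmeas : Measurable fun y => dist x y ^ (-r) := by fun_prop
  refine hint.integrableOn.mono' hmeas.aestronglyMeasurable ?_
  filter_upwards [ae_restrict_mem (measurableSet_le measurable_const (by fun_prop))]
    with y (hy : ε ≤ dist x y)
  rw [Real.norm_of_nonneg (by positivity), ← dist_eq_norm, dist_comm y x,
    ← Real.mul_rpow (by positivity) (by positivity)]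
  refine Real.rpow_le_rpow_of_nonpos (by positivity) ?_ (neg_nonpos.mpr hr0.le)
  rw [div_mul_eq_mul_div, div_le_iff₀ (by positivity)]
  linarith

lemma truncatedFracCurv_sub_of_subset (hr : Module.finrank ℝ V < r) (hE : MeasurableSet E)
    (hF : MeasurableSet F) (hEF : E ⊆ F) (hε : 0 < ε) :
    truncatedFracCurv μ r E x ε - truncatedFracCurv μ r F x ε =
      2 * ∫ y in {y | ε ≤ dist x y} ∩ (F \ E), dist x y ^ (-r) ∂μ := by
  have hint {G : Set V} (hG : MeasurableSet G) :
      IntegrableOn (fun y => signDensity G y * dist x y ^ (-r)) {y | ε ≤ dist x y} μ :=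
    (integrableOn_dist_rpow_neg hr x hε).bdd_mul (measurable_signDensity hG).aestronglyMeasurable
      (.of_forall fun y => (abs_signDensity G y).le)
  have hdiff (y : V) : signDensity E y * dist x y ^ (-r) - signDensity F y * dist x y ^ (-r) =
      (F \ E).indicator (fun y => 2 * dist x y ^ (-r)) y := by
    rw [← sub_mul, signDensity_sub_signDensity_of_subset hEF, indicator_mul_left]
  rw [truncatedFracCurv, truncatedFracCurv, ← integral_sub (hint hE) (hint hF)]
  simp_rw [hdiff]
  rw [setIntegral_indicator (hF.diff hE), integral_const_mul]

lemma lt_of_tendsto_truncatedFracCurv_of_subset [Nontrivial V] (hr : Module.finrank ℝ V < r)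
    (hE : MeasurableSet E) (hF : MeasurableSet F) (hEF : E ⊆ F) (hpos : 0 < μ (F \ E)) {a b : ℝ}
    (hlimF : Tendsto (truncatedFracCurv μ r F x) (𝓝[>] 0) (𝓝 a))
    (hlimE : Tendsto (truncatedFracCurv μ r E x) (𝓝[>] 0) (𝓝 b)) : a < b := by
  obtain ⟨δ, hδ, hmass⟩ := exists_pos_measure_le_dist_inter_pos x hpos
  have hint {ε : ℝ} (hε : 0 < ε) :
      IntegrableOn (fun y => dist x y ^ (-r)) ({y | ε ≤ dist x y} ∩ (F \ E)) μ :=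
    (integrableOn_dist_rpow_neg hr x hε).mono_set inter_subset_left
  have hnonneg (A : Set V) : 0 ≤ᵐ[μ.restrict A] fun y => dist x y ^ (-r) :=
    .of_forall fun y => Real.rpow_nonneg dist_nonneg _
  have hgap : 0 < ∫ y in {y | δ ≤ dist x y} ∩ (F \ E), dist x y ^ (-r) ∂μ := by
    rw [setIntegral_pos_iff_support_of_nonneg_ae (hnonneg _) (hint hδ)]
    refine hmass.trans_le (measure_mono fun y hy => ⟨?_, hy⟩)
    exact (Real.rpow_pos_of_pos (hδ.trans_le hy.1) _).ne'
  have hle : 2 * ∫ y in {y | δ ≤ dist x y} ∩ (F \ E), dist x y ^ (-r) ∂μ ≤ b - a := by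
    refine ge_of_tendsto (hlimE.sub hlimF) ?_
    filter_upwards [Ioo_mem_nhdsGT hδ] with ε hε
    rw [truncatedFracCurv_sub_of_subset hr hE hF hEF hε.1]
    have hsub : {y | δ ≤ dist x y} ⊆ {y | ε ≤ dist x y} := fun y hy => hε.2.le.trans hy
    gcongr 2 * ?_
    exact setIntegral_mono_set (hint hε.1) (hnonneg _) (inter_subset_inter_left _ hsub).eventuallyLE
  linarith

end TruncatedFracCurv

section LogPolar

/-- Logarithmic polar coordinates on the plane: `t + iθ` is sent to the nonzero point with
distance `exp t` to the origin and angle `θ`. -/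
noncomputable def logPolar (z : ℂ) : EuclideanSpace ℝ (Fin 2) :=
  Complex.orthonormalBasisOneI.repr (Complex.exp z)

lemma logPolar_apply_zero (z : ℂ) : logPolar z 0 = Real.exp z.re * Real.cos z.im := by
  simp [logPolar, Complex.orthonormalBasisOneI_repr_apply, Complex.exp_re]

lemma logPolar_apply_one (z : ℂ) : logPolar z 1 = Real.exp z.re * Real.sin z.im := by
  simp [logPolar, Complex.orthonormalBasisOneI_repr_apply, Complex.exp_im]

lemma isOpenMap_logPolar : IsOpenMap logPolar :=
  Complex.orthonormalBasisOneI.repr.toHomeomorph.isOpenMap.comp Complex.isOpenMap_exp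

lemma logPolar_eq_logPolar_iff {z w : ℂ} :
    logPolar z = logPolar w ↔ ∃ n : ℤ, z = w + n * (2 * π * Complex.I) := by
  rw [logPolar, logPolar, EmbeddingLike.apply_eq_iff_eq, Complex.exp_eq_exp_iff_exists_int]

lemma exists_logPolar_eq {p : EuclideanSpace ℝ (Fin 2)} (hp : p ≠ 0) (a : ℝ) :
    ∃ z : ℂ, z.im ∈ Ico a (a + 2 * π) ∧ logPolar z = p := by
  set e := Complex.orthonormalBasisOneI.repr
  obtain ⟨n, hn, -⟩ := existsUnique_add_zsmul_mem_Ico two_pi_pos (Complex.log (e.symm p)).im a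
  have hne : e.symm p ≠ 0 := by simpa using hp
  refine ⟨Complex.log (e.symm p) + n * (2 * π * Complex.I), by simpa using hn, ?_⟩
  rw [logPolar, Complex.exp_periodic.int_mul n, Complex.exp_log hne]
  exact e.apply_symm_apply p

end LogPolar

section LineFunctional

/-- The signed distance to the line through `0` with direction `(cos θ, sin θ)`, positive on its
left. -/
noncomputable def lineFunctional (θ : ℝ) : EuclideanSpace ℝ (Fin 2) →L[ℝ] ℝ :=
  Real.cos θ • EuclideanSpace.proj 1 - Real.sin θ • EuclideanSpace.proj 0

lemma lineFunctional_of_polar {p : EuclideanSpace ℝ (Fin 2)} {r φ : ℝ} (h0 : p 0 = r * Real.cos φ)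
    (h1 : p 1 = r * Real.sin φ) (θ : ℝ) : lineFunctional θ p = r * Real.sin (φ - θ) := by
  simp only [lineFunctional, sub_apply, smul_apply, PiLp.proj_apply, smul_eq_mul, h0, h1,
    Real.sin_sub]
  ring

lemma lineFunctional_logPolar (θ : ℝ) (z : ℂ) :
    lineFunctional θ (logPolar z) = Real.exp z.re * Real.sin (z.im - θ) :=
  lineFunctional_of_polar (logPolar_apply_zero z) (logPolar_apply_one z) θ

lemma lineFunctional_sub_pi (θ : ℝ) : lineFunctional (θ - π) = -lineFunctional θ := by
  simp [lineFunctional, Real.cos_sub_pi, Real.sin_sub_pi]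
  abel

lemma lineFunctional_ne_zero (θ : ℝ) : lineFunctional θ ≠ 0 := by
  intro h
  have := lineFunctional_logPolar θ ⟨0, θ + π / 2⟩
  simp [h] at this

end LineFunctional

section Sector

variable {θ₀ θ₁ α β : ℝ} {z : ℂ}

lemma zero_mem_sector (hα : 0 ≤ α) : 0 ∈ sector θ₀ α :=
  ⟨0, θ₀, le_rfl, ⟨le_rfl, by linarith⟩, by simp, by simp⟩

lemma sector_subset_sector (hθ : θ₀ ≤ θ₁) (hβ : θ₁ + β ≤ θ₀ + α) :
    sector θ₁ β ⊆ sector θ₀ α := by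
  rintro p ⟨r, θ, hr, hmem, hp⟩
  exact ⟨r, θ, hr, Icc_subset_Icc hθ hβ hmem, hp⟩

lemma logPolar_mem_sector (hz : z.im ∈ Icc θ₀ (θ₀ + α)) : logPolar z ∈ sector θ₀ α :=
  ⟨Real.exp z.re, z.im, (Real.exp_pos _).le, hz, logPolar_apply_zero z, logPolar_apply_one z⟩

lemma exists_logPolar_eq_of_mem_sector {p : EuclideanSpace ℝ (Fin 2)} (hp : p ∈ sector θ₀ α)
    (hp0 : p ≠ 0) : ∃ z : ℂ, z.im ∈ Icc θ₀ (θ₀ + α) ∧ logPolar z = p := by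
  obtain ⟨r, θ, hr, hθ, h0, h1⟩ := hp
  have hr0 : r ≠ 0 := by
    rintro rfl
    refine hp0 (PiLp.ext fun i => ?_)
    fin_cases i <;> simp [h0, h1]
  refine ⟨⟨Real.log r, θ⟩, hθ, PiLp.ext fun i => ?_⟩
  have hexp : Real.exp (Real.log r) = r := Real.exp_log (hr.lt_of_ne' hr0)
  fin_cases i
  · simp [logPolar_apply_zero, hexp, h0]
  · simp [logPolar_apply_one, hexp, h1]

-- In this window no other representative of the angle of `logPolar z` lies in `[θ₀, θ₀ + α]`.
lemma logPolar_mem_sector_iff (hz : z.im ∈ Ioo (θ₀ + α - 2 * π) (θ₀ + 2 * π)) :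
    logPolar z ∈ sector θ₀ α ↔ z.im ∈ Icc θ₀ (θ₀ + α) := by
  refine ⟨fun hmem => ?_, logPolar_mem_sector⟩
  have hne : logPolar z ≠ 0 := by simp [logPolar]
  obtain ⟨w, hw, hwz⟩ := exists_logPolar_eq_of_mem_sector hmem hne
  obtain ⟨n, rfl⟩ := logPolar_eq_logPolar_iff.mp hwz
  have him : (z + n * (2 * π * Complex.I)).im = z.im + n * (2 * π) := by simp
  rw [him] at hw
  have hlt : (n : ℝ) * (2 * π) < 1 * (2 * π) := by linarith [hw.2, hz.1]
  have hgt : -1 * (2 * π) < (n : ℝ) * (2 * π) := by linarith [hw.1, hz.2]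
  have hn_lt : n < 1 := by exact_mod_cast lt_of_mul_lt_mul_right hlt two_pi_pos.le
  have hn_gt : -1 < n := by exact_mod_cast lt_of_mul_lt_mul_right hgt two_pi_pos.le
  obtain rfl : n = 0 := by lia
  simpa using hw

lemma logPolar_mem_interior_sector (hz : z.im ∈ Ioo θ₀ (θ₀ + α)) :
    logPolar z ∈ interior (sector θ₀ α) := by
  have hopen : IsOpen (logPolar '' (Complex.im ⁻¹' Ioo θ₀ (θ₀ + α))) :=
    isOpenMap_logPolar _ (isOpen_Ioo.preimage Complex.continuous_im)
  refine mem_interior.mpr ⟨_, ?_, hopen, mem_image_of_mem _ hz⟩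
  rintro _ ⟨w, hw, rfl⟩
  exact logPolar_mem_sector (Ioo_subset_Icc_self hw)

lemma compl_sector (hα : 0 ≤ α) :
    (sector θ₀ α)ᶜ = logPolar '' (Complex.im ⁻¹' Ioo (θ₀ + α) (θ₀ + 2 * π)) := by
  refine Subset.antisymm (fun p hp => ?_) ?_
  · have hp0 : p ≠ 0 := fun h => hp (h ▸ zero_mem_sector hα)
    obtain ⟨z, hz, rfl⟩ := exists_logPolar_eq hp0 θ₀
    refine ⟨z, ⟨?_, hz.2⟩, rfl⟩
    by_contra! hle
    exact hp (logPolar_mem_sector ⟨hz.1, hle⟩)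
  · rintro _ ⟨z, ⟨hzα, hz2⟩, rfl⟩
    rw [mem_compl_iff, logPolar_mem_sector_iff ⟨by linarith, hz2⟩]
    exact fun hz => hzα.not_ge hz.2

lemma isClosed_sector (hα : 0 ≤ α) : IsClosed (sector θ₀ α) := by
  rw [← isOpen_compl_iff, compl_sector hα]
  exact isOpenMap_logPolar _ (isOpen_Ioo.preimage Complex.continuous_im)

lemma lineFunctional_eq_zero_of_mem_frontier_sector (hα : 0 ≤ α)
    {x : EuclideanSpace ℝ (Fin 2)} (hx : x ∈ frontier (sector θ₀ α)) :
    lineFunctional θ₀ x = 0 ∨ lineFunctional (θ₀ + α) x = 0 := by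
  rw [(isClosed_sector hα).frontier_eq] at hx
  rcases eq_or_ne x 0 with rfl | hx0
  · simp
  obtain ⟨z, hz, rfl⟩ := exists_logPolar_eq_of_mem_sector hx.1 hx0
  rcases hz.1.eq_or_lt with h | hlt₀
  · simp [lineFunctional_logPolar, h]
  rcases hz.2.eq_or_lt with h | hlt₁
  · simp [lineFunctional_logPolar, h]
  exact absurd (logPolar_mem_interior_sector ⟨hlt₀, hlt₁⟩) hx.2

lemma sector_pi_eq_halfPlane (θ : ℝ) : sector θ π = {p | 0 ≤ lineFunctional θ p} := by
  ext p
  constructor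
  · rintro ⟨r, φ, hr, ⟨hφ₀, hφ₁⟩, h0, h1⟩
    rw [mem_ofPred_eq, lineFunctional_of_polar h0 h1]
    exact mul_nonneg hr (Real.sin_nonneg_of_nonneg_of_le_pi (by linarith) (by linarith))
  · contrapose
    rw [← mem_compl_iff, compl_sector pi_nonneg]
    rintro ⟨z, ⟨hz₀, hz₁⟩, rfl⟩
    have hsin := Real.sin_neg_of_neg_of_neg_pi_lt (x := z.im - θ - 2 * π) (by linarith)
      (by linarith)
    rw [Real.sin_sub_two_pi] at hsin
    rw [mem_ofPred_eq, lineFunctional_logPolar, not_le]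
    exact mul_neg_of_pos_of_neg (Real.exp_pos _) hsin

lemma volume_sector_diff_sector_pos (hθ : θ₀ ≤ θ₁) (hβ : θ₁ + β ≤ θ₀ + α) (hβ0 : 0 ≤ β)
    (hβα : β < α) (hα : α ≤ 2 * π) : 0 < volume (sector θ₀ α \ sector θ₁ β) := by
  obtain ⟨φ, hφα, hφβ⟩ : ∃ φ ∈ Ioo θ₀ (θ₀ + α), φ ∉ Icc θ₁ (θ₁ + β) := by
    by_contra! hsub
    have hIcc : Icc θ₀ (θ₀ + α) ⊆ Icc θ₁ (θ₁ + β) := by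
      rw [← closure_Ioo (by linarith)]
      exact closure_minimal hsub isClosed_Icc
    have := (Icc_subset_Icc_iff (by linarith)).mp hIcc
    linarith
  have hopen : IsOpen (interior (sector θ₀ α) ∩ (sector θ₁ β)ᶜ) :=
    isOpen_interior.inter (isClosed_sector hβ0).isOpen_compl
  refine (hopen.measure_pos volume ⟨logPolar ⟨0, φ⟩, ?_, ?_⟩).trans_le
    (measure_mono (inter_subset_inter_left _ interior_subset))
  · exact logPolar_mem_interior_sector hφα
  · exact (logPolar_mem_sector_iff ⟨by linarith [hφα.1], by linarith [hφα.2]⟩).not.mpr hφβ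

end Sector

section SectorCurvature

variable {s θ₀ θ₁ α β : ℝ} {x : EuclideanSpace ℝ (Fin 2)}

lemma fracCurvPV_sector_pi {θ : ℝ} (hx : lineFunctional θ x = 0) :
    fracCurvPV s (sector θ π) x 0 := by
  rw [fracCurvPV_iff_tendsto, sector_pi_eq_halfPlane, ← hx]
  refine tendsto_const_nhds.congr fun ε => ?_
  rw [truncatedFracCurv_halfSpace (lineFunctional_ne_zero θ), hx]

lemma fracCurvPV_sector_lt (hs : 0 < s) (hθ : θ₀ ≤ θ₁) (hβ : θ₁ + β ≤ θ₀ + α) (hβ0 : 0 ≤ β)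
    (hβα : β < α) (hα : α ≤ 2 * π) {a b : ℝ} (ha : fracCurvPV s (sector θ₀ α) x a)
    (hb : fracCurvPV s (sector θ₁ β) x b) : a < b :=
  lt_of_tendsto_truncatedFracCurv_of_subset (by simpa using hs)
    (isClosed_sector hβ0).measurableSet
    (isClosed_sector (hβ0.trans hβα.le)).measurableSet (sector_subset_sector hθ hβ)
    (volume_sector_diff_sector_pos hθ hβ hβ0 hβα hα) ha hb

lemma exists_fracCurvPV_sector_pi_eq_zero (s : ℝ) (hα : 0 ≤ α)
    (hx : x ∈ frontier (sector θ₀ α)) :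
    ∃ θ, (θ = θ₀ ∨ θ + π = θ₀ + α) ∧ fracCurvPV s (sector θ π) x 0 := by
  rcases lineFunctional_eq_zero_of_mem_frontier_sector hα hx with hx | hx
  · exact ⟨θ₀, .inl rfl, fracCurvPV_sector_pi hx⟩
  · refine ⟨θ₀ + α - π, .inr (sub_add_cancel _ _), fracCurvPV_sector_pi ?_⟩
    simp [lineFunctional_sub_pi, hx]

end SectorCurvature

theorem fracCurv_sector_sign_general (s : ℝ) (hs : 0 < s) (θ₀ α : ℝ) (hα : α ∈ Ioo 0 (2 * π))
    (x : EuclideanSpace ℝ (Fin 2)) (hx : x ∈ frontier (sector θ₀ α)) (h : ℝ)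
    (hpv : fracCurvPV s (sector θ₀ α) x h) :
    (h ≤ 0 ↔ π ≤ α) ∧ (h = 0 ↔ α = π) := by
  obtain ⟨θ, hθ, hP⟩ := exists_fracCurvPV_sector_pi_eq_zero s hα.1.le hx
  have hlower (hαπ : α ≤ π) : θ ≤ θ₀ ∧ θ₀ + α ≤ θ + π := by
    rcases hθ with hθ | hθ <;> constructor <;> linarith
  have hupper (hαπ : π ≤ α) : θ₀ ≤ θ ∧ θ + π ≤ θ₀ + α := by
    rcases hθ with hθ | hθ <;> constructor <;> linarith
  rcases lt_trichotomy α π with hlt | rfl | hgt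
  · have hpos : 0 < h := fracCurvPV_sector_lt hs (hlower hlt.le).1 (hlower hlt.le).2 hα.1.le hlt
      (by linarith [pi_pos]) hP hpv
    exact ⟨iff_of_false hpos.not_ge hlt.not_ge, iff_of_false hpos.ne' hlt.ne⟩
  · obtain rfl : θ = θ₀ := by simpa using hθ
    obtain rfl : h = 0 := tendsto_nhds_unique hpv hP
    simp
  · have hneg : h < 0 := fracCurvPV_sector_lt hs (hupper hgt.le).1 (hupper hgt.le).2 pi_nonneg hgt
      hα.2.le hpv hP
    exact ⟨iff_of_true hneg.le hgt.le, iff_of_false hneg.ne hgt.ne'⟩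

/-- For a planar sector of opening angle `α ∈ (0, 2π)` and a boundary point `x ≠ 0`,
the fractional curvature `H_s(x,C)` is `≤ 0` iff `α ≥ π`, and `= 0` iff `α = π`. -/
theorem fracCurv_sector_sign (s : ℝ) (hs : s ∈ Set.Ioo (0 : ℝ) 1) (θ₀ α : ℝ)
    (hα : α ∈ Set.Ioo 0 (2 * π)) (x : EuclideanSpace ℝ (Fin 2))
    (hx : x ∈ frontier (sector θ₀ α)) (hx0 : x ≠ 0) (h : ℝ)
    (hpv : fracCurvPV s (sector θ₀ α) x h) :
    (h ≤ 0 ↔ π ≤ α) ∧ (h = 0 ↔ α = π) :=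
  fracCurv_sector_sign_general s hs.1 θ₀ α hα x hx h hpv
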